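/- Let Q be an n×n real matrix and V an invertible n×n matrix such that Q₀ = V⁻¹QV has the property that none of the Gershgorin discs of Q₀ intersect the imaginary axis. Then the number of eigenvalues of Q with positive real part (counted with algebraic multiplicity) equals the number of diagonal entries of Q₀ with positive real part. -/

import Mathlib

open scoped Classical

/-!
The eigenvalues are followed along the homotopy `A t = D + t • N`, `t ∈ [0, 1]`, from the diagonal
part `D` of `Q₀ = V⁻¹ Q V` to `Q₀` itself.  Gershgorin's theorem keeps the eigenvalues of every
`A t` off the imaginary axis (`re_ne_zero_of_mem_roots`) and in a fixed ball
(`norm_le_of_mem_roots`).  Hence the number of eigenvalues in the right half plane is continuous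
in `t` (`isClosed_setOf_rightCount_eq`): if `t k → s`, the vectors of eigenvalues of `A (t k)` have
a convergent subsequence, its limit is a vector of eigenvalues of `A s` because the characteristic
polynomials converge pointwise, and no coordinate of the limit has real part zero, so the signs of
the real parts are eventually those of the limit.  Being integer-valued on the connected space
`[0, 1]`, the count is the same at both ends.
-/

open Filter Topology Polynomial

namespace GershgorinCount

variable {n : ℕ}

/-- The complex matrix with the diagonal of `B` and `t` times the off-diagonal part of `B`. -/
noncomputable def homotopy (B : Matrix (Fin n) (Fin n) ℝ) (t : ℝ) : Matrix (Fin n) (Fin n) ℂ :=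
  Matrix.of fun i j => if i = j then (B i i : ℂ) else (t : ℂ) * (B i j : ℂ)

/-- The number of eigenvalues of `homotopy B t` with positive real part, with algebraic
multiplicity. -/
noncomputable def rightCount (B : Matrix (Fin n) (Fin n) ℝ) (t : ℝ) : ℕ :=
  Multiset.card ((homotopy B t).charpoly.roots.filter fun z => 0 < z.re)

/-- Gershgorin's theorem for `homotopy B t`, with the radius bounded by that of `B`. -/
lemma gershgorin (B : Matrix (Fin n) (Fin n) ℝ) {t : ℝ} (ht0 : 0 ≤ t) (ht1 : t ≤ 1) {z : ℂ}
    (hz : z ∈ (homotopy B t).charpoly.roots) :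
    ∃ i, ‖z - (B i i : ℂ)‖ ≤ ∑ j ∈ Finset.univ.erase i, |B i j| := by
  have hroot := Polynomial.isRoot_of_mem_roots hz
  have hev : Module.End.HasEigenvalue (Matrix.toLin' (homotopy B t)) z := by
    rw [Module.End.hasEigenvalue_iff_isRoot_charpoly, Matrix.charpoly_toLin']
    exact hroot
  obtain ⟨i, hi⟩ := eigenvalue_mem_ball hev
  refine ⟨i, ?_⟩
  rw [mem_closedBall_iff_norm] at hi
  have hd : homotopy B t i i = (B i i : ℂ) := by simp [homotopy]
  rw [hd] at hi
  refine hi.trans (Finset.sum_le_sum fun j hj => ?_)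
  have hij : i ≠ j := (Finset.ne_of_mem_erase hj).symm
  have : homotopy B t i j = (t : ℂ) * (B i j : ℂ) := by simp [homotopy, hij]
  rw [this, norm_mul, Complex.norm_real, Complex.norm_real, Real.norm_eq_abs, Real.norm_eq_abs,
    abs_of_nonneg ht0]
  exact mul_le_of_le_one_left (abs_nonneg _) ht1

lemma re_ne_zero_of_mem_roots {B : Matrix (Fin n) (Fin n) ℝ}
    (hB : ∀ i, ∑ j ∈ Finset.univ.erase i, |B i j| < |B i i|)
    {t : ℝ} (ht0 : 0 ≤ t) (ht1 : t ≤ 1) {z : ℂ} (hz : z ∈ (homotopy B t).charpoly.roots) :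
    z.re ≠ 0 := by
  intro h0
  obtain ⟨i, hi⟩ := gershgorin B ht0 ht1 hz
  have h1 := Complex.abs_re_le_norm (z - (B i i : ℂ))
  rw [Complex.sub_re, h0, Complex.ofReal_re, zero_sub, abs_neg] at h1
  linarith [hB i]

lemma norm_le_of_mem_roots {B : Matrix (Fin n) (Fin n) ℝ} {t : ℝ} (ht0 : 0 ≤ t) (ht1 : t ≤ 1)
    {z : ℂ} (hz : z ∈ (homotopy B t).charpoly.roots) : ‖z‖ ≤ ∑ i, ∑ j, |B i j| := by
  obtain ⟨i, hi⟩ := gershgorin B ht0 ht1 hz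
  have h1 : ‖z‖ ≤ ‖z - (B i i : ℂ)‖ + ‖(B i i : ℂ)‖ := norm_le_norm_sub_add _ _
  rw [Complex.norm_real, Real.norm_eq_abs] at h1
  have h2 : ∑ j ∈ Finset.univ.erase i, |B i j| + |B i i| = ∑ j, |B i j| :=
    Finset.sum_erase_add _ _ (Finset.mem_univ i)
  have h3 : ∑ j, |B i j| ≤ ∑ i, ∑ j, |B i j| :=
    Finset.single_le_sum (f := fun i => ∑ j, |B i j|)
      (fun i _ => Finset.sum_nonneg fun j _ => abs_nonneg _) (Finset.mem_univ i)
  linarith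

lemma exists_roots_eq (A : Matrix (Fin n) (Fin n) ℂ) :
    ∃ r : Fin n → ℂ, A.charpoly.roots = Finset.univ.val.map r := by
  have hcard : A.charpoly.roots.toList.length = n := by
    rw [Multiset.length_toList, IsAlgClosed.card_roots_eq_natDegree,
      Matrix.charpoly_natDegree_eq_dim, Fintype.card_fin]
  refine ⟨fun i => A.charpoly.roots.toList.get (i.cast hcard.symm), ?_⟩
  rw [Fin.univ_val_map]
  conv_lhs => rw [← Multiset.coe_toList A.charpoly.roots]
  congr 1
  apply List.ext_get
  · simp [hcard]
  · intro k h1 h2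
    simp

lemma eval_charpoly_eq_prod {A : Matrix (Fin n) (Fin n) ℂ} {r : Fin n → ℂ}
    (h : A.charpoly.roots = Finset.univ.val.map r) (z : ℂ) :
    A.charpoly.eval z = ∏ i, (z - r i) := by
  have h1 := (IsAlgClosed.splits A.charpoly).eq_prod_roots_of_monic A.charpoly_monic
  rw [h1, h, Multiset.map_map, Polynomial.eval_multiset_prod, Multiset.map_map]
  simp [Finset.prod]

lemma roots_eq_of_eval_eq {A : Matrix (Fin n) (Fin n) ℂ} {r : Fin n → ℂ}
    (h : ∀ z, A.charpoly.eval z = ∏ i, (z - r i)) :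
    A.charpoly.roots = Finset.univ.val.map r := by
  have h1 : A.charpoly = ∏ i, (X - C (r i)) := by
    refine Polynomial.funext fun z => ?_
    rw [h z, Polynomial.eval_prod]
    simp
  have h2 : ∏ i, (X - C (r i)) = ((Finset.univ.val.map r).map fun a => X - C a).prod := by
    rw [Multiset.map_map]
    rfl
  rw [h1, h2, Polynomial.roots_multiset_prod_X_sub_C]

lemma card_filter_map (r : Fin n → ℂ) :
    Multiset.card ((Finset.univ.val.map r).filter fun z => 0 < z.re)
      = (Finset.univ.filter fun i => 0 < (r i).re).card := by
  rw [Multiset.filter_map, Multiset.card_map]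
  rfl

lemma continuous_eval_charpoly (B : Matrix (Fin n) (Fin n) ℝ) (z : ℂ) :
    Continuous fun t : ℝ => (homotopy B t).charpoly.eval z := by
  have hA : Continuous fun t : ℝ => homotopy B t := by
    refine continuous_matrix fun i j => ?_
    by_cases hij : i = j
    · simpa [homotopy, hij] using continuous_const
    · simp only [homotopy, hij, Matrix.of_apply, if_false]
      fun_prop
  simp only [Matrix.eval_charpoly]
  exact (continuous_const.sub hA).matrix_det

lemma isClosed_setOf_rightCount_eq {B : Matrix (Fin n) (Fin n) ℝ}
    (hB : ∀ i, ∑ j ∈ Finset.univ.erase i, |B i j| < |B i i|) (m : ℕ) :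
    IsClosed {t : unitInterval | rightCount B t = m} := by
  refine IsSeqClosed.isClosed fun t s ht hts => ?_
  choose r hr using fun k => exists_roots_eq (homotopy B (t k))
  have hmem : ∀ k i, r k i ∈ (homotopy B (t k)).charpoly.roots := fun k i => by
    rw [hr k]
    exact Multiset.mem_map_of_mem _ (Finset.mem_univ i)
  have hbd : ∀ k, r k ∈ Metric.closedBall (0 : Fin n → ℂ) (∑ i, ∑ j, |B i j|) := fun k => by
    have h0 : 0 ≤ ∑ i, ∑ j, |B i j| :=
      Finset.sum_nonneg fun i _ => Finset.sum_nonneg fun j _ => abs_nonneg _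
    rw [mem_closedBall_zero_iff, pi_norm_le_iff_of_nonneg h0]
    exact fun i => norm_le_of_mem_roots (t k).2.1 (t k).2.2 (hmem k i)
  obtain ⟨q, -, φ, hφ, hq⟩ := tendsto_subseq_of_bounded Metric.isBounded_closedBall hbd
  have hqi : ∀ i, Tendsto (fun k => r (φ k) i) atTop (𝓝 (q i)) := fun i =>
    (tendsto_pi_nhds.1 hq) i
  have hroots : (homotopy B s).charpoly.roots = Finset.univ.val.map q := by
    refine roots_eq_of_eval_eq fun z => ?_
    have h1 : Tendsto (fun k => (homotopy B (t (φ k))).charpoly.eval z) atTop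
        (𝓝 ((homotopy B s).charpoly.eval z)) :=
      ((continuous_eval_charpoly B z).comp continuous_subtype_val).tendsto s |>.comp
        (hts.comp hφ.tendsto_atTop)
    have h2 : Tendsto (fun k => ∏ i, (z - r (φ k) i)) atTop (𝓝 (∏ i, (z - q i))) :=
      tendsto_finsetProd _ fun i _ => tendsto_const_nhds.sub (hqi i)
    simp only [eval_charpoly_eq_prod (hr _)] at h1
    exact tendsto_nhds_unique h1 h2
  have hsign : ∀ i, ∀ᶠ k in atTop, (0 < (r (φ k) i).re ↔ 0 < (q i).re) := fun i => by
    have hne : (q i).re ≠ 0 := by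
      refine re_ne_zero_of_mem_roots hB s.2.1 s.2.2 (z := q i) ?_
      rw [hroots]
      exact Multiset.mem_map_of_mem _ (Finset.mem_univ i)
    have hre := (Complex.continuous_re.tendsto (q i)).comp (hqi i)
    rcases lt_or_gt_of_ne hne with h | h
    · filter_upwards [hre.eventually_lt_const h] with k hk
      exact iff_of_false (not_lt_of_gt hk) (not_lt_of_gt h)
    · filter_upwards [hre.eventually_const_lt h] with k hk
      exact iff_of_true hk h
  obtain ⟨k, hk⟩ := (eventually_all.2 hsign).exists
  have hcount := ht (φ k)
  simp only [Set.mem_ofPred_eq, rightCount, hr, hroots, card_filter_map] at hcount ⊢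
  rw [← hcount]
  congr 1
  exact Finset.filter_congr fun i _ => (hk i).symm

lemma rightCount_le (B : Matrix (Fin n) (Fin n) ℝ) (t : ℝ) : rightCount B t ≤ n := by
  obtain ⟨r, hr⟩ := exists_roots_eq (homotopy B t)
  rw [rightCount, hr, card_filter_map]
  exact (Finset.card_filter_le _ _).trans (by simp)

lemma rightCount_zero_eq_one {B : Matrix (Fin n) (Fin n) ℝ}
    (hB : ∀ i, ∑ j ∈ Finset.univ.erase i, |B i j| < |B i i|) :
    rightCount B 0 = rightCount B 1 := by
  -- With values in a finite discrete space, closed fibres suffice for continuity.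
  let f : unitInterval → Fin (n + 1) := fun t =>
    ⟨rightCount B t, Nat.lt_succ_of_le (rightCount_le B t)⟩
  have hf : Continuous f := by
    refine continuous_iff_isClosed.2 fun S _ => ?_
    have : f ⁻¹' S = ⋃ m ∈ S, {t : unitInterval | rightCount B t = (m : ℕ)} := by
      ext t
      simp only [Set.mem_preimage, Set.mem_iUnion]
      constructor
      · intro h
        exact ⟨f t, h, rfl⟩
      · rintro ⟨m, hm, h⟩
        rwa [show f t = m from Fin.ext h]
    rw [this]
    exact S.toFinite.isClosed_biUnion fun m _ => isClosed_setOf_rightCount_eq hB m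
  have h := PreconnectedSpace.constant (inferInstance : PreconnectedSpace unitInterval) hf
    (x := 0) (y := 1)
  simpa [f] using h

lemma rightCount_zero (B : Matrix (Fin n) (Fin n) ℝ) :
    rightCount B 0 = (Finset.univ.filter fun i => 0 < B i i).card := by
  have h : homotopy B 0 = Matrix.diagonal fun i => (B i i : ℂ) := by
    ext i j
    by_cases hij : i = j <;> simp [homotopy, hij]
  have hr : (homotopy B 0).charpoly.roots = Finset.univ.val.map fun i => (B i i : ℂ) := by
    refine roots_eq_of_eval_eq fun z => ?_
    rw [h, Matrix.charpoly_diagonal, Polynomial.eval_prod]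
    simp
  rw [rightCount, hr, card_filter_map]
  simp

lemma homotopy_one (B : Matrix (Fin n) (Fin n) ℝ) :
    homotopy B 1 = B.map (Complex.ofReal : ℝ → ℂ) := by
  ext i j
  by_cases hij : i = j <;> simp [homotopy, hij]

end GershgorinCount

/-- Gershgorin-disc eigenvalue counting after a similarity transformation: if no
Gershgorin disc of `Q₀ = V⁻¹ Q V` meets the imaginary axis, then the number of
eigenvalues of `Q` with positive real part (with algebraic multiplicity) equals the
number of positive diagonal entries of `Q₀`. -/
theorem gershgorin_eigenvalue_count {n : ℕ}
    (Q V : Matrix (Fin n) (Fin n) ℝ) (hV : IsUnit V)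
    (hGersh : ∀ i : Fin n,
      ∑ j ∈ Finset.univ.erase i, |(V⁻¹ * Q * V) i j| < |(V⁻¹ * Q * V) i i|) :
    Multiset.card
        (((Q.map (Complex.ofReal : ℝ → ℂ)).charpoly.roots).filter fun z => 0 < z.re)
      = (Finset.univ.filter fun i : Fin n => 0 < (V⁻¹ * Q * V) i i).card := by
  have hsim : (V⁻¹ * Q * V).charpoly = Q.charpoly := by
    rw [Matrix.charpoly_mul_comm, ← mul_assoc,
      Matrix.mul_nonsing_inv _ ((Matrix.isUnit_iff_isUnit_det V).1 hV), one_mul]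
  have hmap : (Q.map (Complex.ofReal : ℝ → ℂ)).charpoly
      = ((V⁻¹ * Q * V).map (Complex.ofReal : ℝ → ℂ)).charpoly := by
    have h1 := Matrix.charpoly_map Q Complex.ofRealHom
    have h2 := Matrix.charpoly_map (V⁻¹ * Q * V) Complex.ofRealHom
    rw [hsim] at h2
    exact h1.trans h2.symm
  rw [hmap, ← GershgorinCount.rightCount_zero, GershgorinCount.rightCount_zero_eq_one hGersh,
    GershgorinCount.rightCount, GershgorinCount.homotopy_one]
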